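/- arXiv:1607.08413 — 3 statements merged into one kernel-verified Lean document; each statement's English description precedes it below -/
import Mathlib

section
/- Let n ≥ 2 be an integer and let Λ ⊂ ℝ² be a closed set that is 2-periodic with respect to the second variable. Let f_1, …, f_n ∈ L¹(ℝ) satisfy f̂_1(ξ) + e^{πiη} f̂_2(ξ) + ⋯ + e^{(n−1)πiη} f̂_n(ξ) = 0 for all (ξ, η) ∈ Λ. If 2 ≤ k ≤ n−1 and ξ_0 ∈ Π^k(Λ) \ Π^{k*}_{su}(Λ), then f̂_j(ξ_0) = 0 for every j = 1, …, n. -/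
open MeasureTheory Complex

/-- Fourier transform with the convention `f̂(ξ) = ∫ e^{πixξ} f(x) dx`. -/
noncomputable def FT (f : ℝ → ℂ) (ξ : ℝ) : ℂ :=
  ∫ x : ℝ, Complex.exp (Real.pi * Complex.I * x * ξ) * f x

/-- `e^{πiη}`. -/
noncomputable def cexpEta (η : ℝ) : ℂ := Complex.exp (Real.pi * Complex.I * η)

/-- `Λ` is 2-periodic with respect to the second variable. -/
def Periodic2 (Λ : Set (ℝ × ℝ)) : Prop :=
  ∀ ξ η : ℝ, (ξ, η) ∈ Λ ↔ (ξ, η + 2) ∈ Λ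

/-- The projection `Π(Λ)` of `Λ` on the x-axis. -/
def proj (Λ : Set (ℝ × ℝ)) : Set ℝ := {ξ | ∃ η : ℝ, (ξ, η) ∈ Λ}

/-- `Img(ξ) = {η ∈ [0,2) : (ξ,η) ∈ Λ}`. -/
def Img (Λ : Set (ℝ × ℝ)) (ξ : ℝ) : Set ℝ := {η | η ∈ Set.Ico (0 : ℝ) 2 ∧ (ξ, η) ∈ Λ}

/-- `Π^k(Λ)` for `k < n`: points of `Π(Λ)` whose `Img` has exactly `k` elements. -/
def projExact (Λ : Set (ℝ × ℝ)) (k : ℕ) : Set ℝ :=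
  {ξ | ξ ∈ proj Λ ∧ (Img Λ ξ).encard = k}

/-- `Π^n(Λ)`: points of `Π(Λ)` whose `Img` has at least `n` elements. -/
def projAtLeast (Λ : Set (ℝ × ℝ)) (n : ℕ) : Set ℝ :=
  {ξ | ξ ∈ proj Λ ∧ (n : ℕ∞) ≤ (Img Λ ξ).encard}

/-- `ψ ∈ P^{E,ξ}_l` : there are an open interval `I ∋ ξ` and `φ_1,…,φ_{l-1} ∈ L¹(ℝ)` with
`φ̂_1 + φ̂_2 ψ + ⋯ + φ̂_{l-1} ψ^{l-2} + ψ^{l-1} = 0` on `I ∩ E`. -/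
def Pmem (E : Set ℝ) (ξ : ℝ) (l : ℕ) (ψ : ℝ → ℂ) : Prop :=
  ∃ a b : ℝ, ξ ∈ Set.Ioo a b ∧
    ∃ φ : Fin (l - 1) → ℝ → ℂ, (∀ i, Integrable (φ i)) ∧
      ∀ x ∈ Set.Ioo a b ∩ E,
        (∑ i : Fin (l - 1), FT (φ i) x * ψ x ^ (i : ℕ)) + ψ x ^ (l - 1) = 0

/-- `Π^{1*}(Λ)`: those `ξ ∈ Π^1(Λ)` such that `χ ∈ P^{Π^1(Λ),ξ}_n`, where
`χ(ξ') = e^{πiη}` with `η` the unique element of `Img(ξ')`. -/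
def projOneStar (Λ : Set (ℝ × ℝ)) (n : ℕ) : Set ℝ :=
  {ξ | ξ ∈ projExact Λ 1 ∧ ∃ χ : ℝ → ℂ,
    (∀ ξ' ∈ projExact Λ 1, ∀ η ∈ Img Λ ξ', χ ξ' = cexpEta η) ∧
    Pmem (projExact Λ 1) ξ n χ}

/-- `Π^{k*}_{su}(Λ)`. -/
def projStarSu (Λ : Set (ℝ × ℝ)) (n k : ℕ) : Set ℝ :=
  {ξ | ξ ∈ projExact Λ k ∧ ∃ a b : ℝ, ξ ∈ Set.Ioo a b ∧
    ∃ φ : Fin (n - 1) → ℝ → ℂ, (∀ i, Integrable (φ i)) ∧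
      ∀ ξ' ∈ Set.Ioo a b ∩ projExact Λ k, ∀ η ∈ Img Λ ξ',
        (∑ i : Fin (n - 1), FT (φ i) ξ' * cexpEta η ^ (i : ℕ)) = -(cexpEta η ^ (n - 1))}

/-- `Π^{k*}_{ne}(Λ)` for `k ≥ 2`. -/
def projStarNe (Λ : Set (ℝ × ℝ)) (k : ℕ) : Set ℝ :=
  {ξ | ξ ∈ projExact Λ k ∧ ∃ a b : ℝ, ξ ∈ Set.Ioo a b ∧
    ∃ φ : Fin k → ℝ → ℂ, (∀ i, Integrable (φ i)) ∧
      ∀ ξ' ∈ Set.Ioo a b ∩ projExact Λ k, ∀ η ∈ Img Λ ξ',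
        (∑ i : Fin k, FT (φ i) ξ' * cexpEta η ^ (i : ℕ)) = -(cexpEta η ^ k)}

/-- `(Γ, Λ)` with `Γ = ℝ × {0,…,n-1}` is a Heisenberg uniqueness pair: every admissible
measure `μ = Σ_m (x ↦ (x,m))_*(f_m dx)` (with each `f_m ∈ L¹(ℝ)`) whose Fourier transform
`μ̂(ξ,η) = Σ_m e^{mπiη} f̂_m(ξ)` vanishes on `Λ` must be zero, i.e. each `f_m = 0` a.e. -/
def IsHUP (n : ℕ) (Λ : Set (ℝ × ℝ)) : Prop :=
  ∀ f : Fin n → ℝ → ℂ, (∀ m, Integrable (f m)) →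
    (∀ ξ η : ℝ, (ξ, η) ∈ Λ → ∑ m : Fin n, cexpEta η ^ (m : ℕ) * FT (f m) ξ = 0) →
    ∀ m, f m =ᵐ[volume] (0 : ℝ → ℂ)

/-- Weierstrass-type factorisation over a Banach algebra (given by a bilinear map). -/
theorem wfactor {X : Type*} [NormedAddCommGroup X] [NormedSpace ℂ X] [CompleteSpace X]
    (B : X →L[ℂ] X →L[ℂ] X) {ι : Type*} (ev : ι → X →L[ℂ] ℂ)
    (hev : ∀ i x, ‖ev i x‖ ≤ ‖x‖) (hmul : ∀ i x y, ev i (B x y) = ev i x * ev i y)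
    (a m : ℕ) (c : Fin m → ℂ) :
    ∃ δ > 0, ∀ r : Fin (a + m) → X, ‖r‖ < δ → ∃ t : Fin m → X, ∀ i, ∀ z : ℂ, ‖z‖ = 1 →
      z ^ m + ∑ j, c j * z ^ (j : ℕ) + ∑ l, ev i (r l) * z ^ (l : ℕ) = 0 →
      z ^ m + ∑ j, (c j + ev i (t j)) * z ^ (j : ℕ) = 0 := by
  classical
  let n := a + m
  let E : Fin n → X →L[ℂ] (Fin n → X) := fun l => ContinuousLinearMap.single ℂ (fun _ => X) l
  let ij : Fin a → Fin m → Fin n := fun i j => ⟨i + j, by omega⟩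
  let im : Fin a → Fin n := fun i => ⟨i + m, by omega⟩
  let jj : Fin m → Fin n := fun j => ⟨j, by omega⟩
  let S : Type _ := (Fin a → X) × (Fin m → X)
  let ps : Fin a → ((Fin a → X) × (Fin m → X)) →L[ℂ] X := fun i =>
    (ContinuousLinearMap.proj i).comp (ContinuousLinearMap.fst ℂ (Fin a → X) (Fin m → X))
  let pt : Fin m → ((Fin a → X) × (Fin m → X)) →L[ℂ] X := fun i =>
    (ContinuousLinearMap.proj i).comp (ContinuousLinearMap.snd ℂ (Fin a → X) (Fin m → X))
  let L : ((Fin a → X) × (Fin m → X)) →L[ℂ] (Fin n → X) :=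
    ∑ i, (∑ j, c j • (E (ij i j)).comp (ps i) + (E (im i)).comp (ps i))
      + ∑ j, (E (jj j)).comp (pt j)
  let Q : ((Fin a → X) × (Fin m → X)) → (Fin n → X) := fun p =>
    ∑ i, ∑ j, E (ij i j) (B (p.1 i) (p.2 j))
  have hQ : HasStrictFDerivAt Q (0 : ((Fin a → X) × (Fin m → X)) →L[ℂ] (Fin n → X)) 0 := by
    have h1 : ∀ i j, HasStrictFDerivAt (fun p : (Fin a → X) × (Fin m → X) =>
        E (ij i j) (B (p.1 i) (p.2 j)))
        (0 : ((Fin a → X) × (Fin m → X)) →L[ℂ] (Fin n → X)) 0 := by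
      intro i j
      have hb := (B.isBoundedBilinearMap.hasStrictFDerivAt ((0 : X), (0 : X)))
      have hc : HasStrictFDerivAt (fun p : (Fin a → X) × (Fin m → X) => (ps i p, pt j p))
          ((ps i).prod (pt j)) 0 := ((ps i).prod (pt j)).hasStrictFDerivAt
      have hd := (E (ij i j)).hasStrictFDerivAt (x := B 0 0)
      have h2 := HasStrictFDerivAt.comp (g := fun p : X × X => B p.1 p.2)
        (0 : (Fin a → X) × (Fin m → X)) (by simpa using hb) hc
      have h3 := (E (ij i j)).hasStrictFDerivAt.comp
        (0 : (Fin a → X) × (Fin m → X)) h2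
      have h4 : (E (ij i j)).comp ((B.isBoundedBilinearMap.deriv ((0 : X), (0 : X))).comp
          ((ps i).prod (pt j))) = 0 := by
        refine ContinuousLinearMap.ext fun p => ?_
        simp
      exact h4 ▸ h3
    have := HasStrictFDerivAt.fun_sum (u := Finset.univ) (fun i (_ : i ∈ Finset.univ) =>
      HasStrictFDerivAt.fun_sum (u := Finset.univ) (fun j (_ : j ∈ Finset.univ) => h1 i j))
    simp only [Finset.sum_const_zero] at this
    exact this
  have hF : HasStrictFDerivAt (fun p => L p + Q p) L 0 := by
    simpa using L.hasStrictFDerivAt.add hQ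
  have hLE : ∀ p, L p = ∑ i, (∑ j, c j • E (ij i j) (p.1 i) + E (im i) (p.1 i))
      + ∑ j, E (jj j) (p.2 j) := by
    intro p
    simp [L, ps, pt]
  have hsurj : L.range = ⊤ := by
    have hs : ∀ l : ℕ, ∀ hl : l < n, ∀ x : X, E ⟨l, hl⟩ x ∈ L.range := by
      intro l
      induction l using Nat.strong_induction_on with
      | _ l ih =>
        intro hl x
        by_cases hlm : l < m
        · refine ⟨(0, Pi.single ⟨l, hlm⟩ x), ?_⟩
          show L _ = _
          rw [hLE]
          simp only [Pi.zero_apply, map_zero, smul_zero, Finset.sum_const_zero, add_zero, zero_add]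
          rw [Finset.sum_eq_single ⟨l, hlm⟩]
          · simp [jj]
          · intro b _ hb
            simp [Pi.single_eq_of_ne hb]
          · simp
        · have hla : l - m < a := by omega
          have h1 : L (Pi.single ⟨l - m, hla⟩ x, 0) =
              ∑ j, c j • E (ij ⟨l - m, hla⟩ j) x + E ⟨l, hl⟩ x := by
            rw [hLE]
            simp only [Pi.zero_apply, map_zero, Finset.sum_const_zero, add_zero]
            rw [Finset.sum_eq_single ⟨l - m, hla⟩]
            · have : im ⟨l - m, hla⟩ = ⟨l, hl⟩ := by
                apply Fin.ext; simp [im]; omega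
              simp [this]
            · intro b _ hb
              simp [Pi.single_eq_of_ne hb]
            · simp
          have h2 : E ⟨l, hl⟩ x = L (Pi.single ⟨l - m, hla⟩ x, 0) -
              ∑ j, c j • E (ij ⟨l - m, hla⟩ j) x := by rw [h1]; abel
          rw [h2]
          refine Submodule.sub_mem _ ⟨_, rfl⟩ (Submodule.sum_mem _ fun j _ =>
            Submodule.smul_mem _ _ (ih _ ?_ _ _))
          simp; omega
    rw [eq_top_iff]
    intro r _
    have : r = ∑ l, E l (r l) := by
      ext l; simp [E, Finset.sum_apply, Pi.single_apply]
    rw [this]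
    exact Submodule.sum_mem _ fun l _ => hs l l.2 _
  have hmap := hF.map_nhds_eq_of_surj hsurj
  have hU : {p : (Fin a → X) × (Fin m → X) | ∑ i, ‖p.1 i‖ < 1} ∈
      nhds (0 : (Fin a → X) × (Fin m → X)) := by
    apply IsOpen.mem_nhds
    · exact isOpen_lt (by fun_prop) continuous_const
    · simp
  have hV := Filter.image_mem_map (m := fun p => L p + Q p) hU
  rw [hmap] at hV
  have h0 : L 0 + Q 0 = 0 := by simp [Q]
  rw [h0, Metric.mem_nhds_iff] at hV
  obtain ⟨δ, hδ, hball⟩ := hV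
  refine ⟨δ, hδ, fun r hr => ?_⟩
  obtain ⟨⟨s, t⟩, hst, hF⟩ := hball (show r ∈ Metric.ball 0 δ by simpa using hr)
  refine ⟨t, fun i z hz hp => ?_⟩
  simp only [Set.mem_ofPred_eq] at hst
  let χ : (Fin n → X) →L[ℂ] ℂ := ∑ l : Fin n, (z ^ (l : ℕ)) • (ev i).comp (ContinuousLinearMap.proj l)
  have hχ : ∀ v, χ v = ∑ l, ev i (v l) * z ^ (l : ℕ) := by
    intro v
    simp [χ, mul_comm]
  have hχE : ∀ l x, χ (E l x) = ev i x * z ^ (l : ℕ) := by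
    intro l x
    rw [hχ, Finset.sum_eq_single l]
    · simp [E]
    · intro b _ hb
      simp [E, Pi.single_eq_of_ne hb]
    · simp
  have hr2 : χ r = (∑ k, ev i (s k) * z ^ (k : ℕ)) *
      (z ^ m + ∑ j, (c j + ev i (t j)) * z ^ (j : ℕ)) + ∑ j, ev i (t j) * z ^ (j : ℕ) := by
    rw [← hF]
    simp only [hLE, Q, map_add, map_sum, map_smul, hχE, hmul]
    simp only [ij, im, jj, mul_add, Finset.mul_sum, Finset.sum_mul, Finset.sum_add_distrib, add_mul,
      smul_eq_mul, pow_add]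
    rw [Finset.sum_comm (s := (Finset.univ : Finset (Fin a)))]
    have e1 : ∑ x, ∑ y : Fin a, c x * (ev i (s y) * (z ^ (y : ℕ) * z ^ (x : ℕ))) =
        ∑ x, ∑ y : Fin a, ev i (s y) * z ^ (y : ℕ) * (c x * z ^ (x : ℕ)) :=
      Finset.sum_congr rfl fun _ _ => Finset.sum_congr rfl fun _ _ => by ring
    have e2 : ∑ y : Fin a, ∑ x, ev i (s y) * ev i (t x) * (z ^ (y : ℕ) * z ^ (x : ℕ)) =
        ∑ x, ∑ y : Fin a, ev i (s y) * z ^ (y : ℕ) * (ev i (t x) * z ^ (x : ℕ)) := by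
      rw [Finset.sum_comm]
      exact Finset.sum_congr rfl fun _ _ => Finset.sum_congr rfl fun _ _ => by ring
    rw [e1, e2]
    have e3 : ∑ y : Fin a, ev i (s y) * (z ^ (y : ℕ) * z ^ m) =
        ∑ y : Fin a, ev i (s y) * z ^ (y : ℕ) * z ^ m :=
      Finset.sum_congr rfl fun _ _ => by ring
    rw [e3]; ring
  rw [← hχ, hr2] at hp
  have hprod : (1 + ∑ k, ev i (s k) * z ^ (k : ℕ)) *
      (z ^ m + ∑ j, (c j + ev i (t j)) * z ^ (j : ℕ)) = 0 := by
    rw [← hp, add_mul, one_mul]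
    simp only [add_mul (c _), Finset.sum_add_distrib]
    ring
  refine (mul_eq_zero.mp hprod).resolve_left fun h => ?_
  have h1 : ‖∑ k, ev i (s k) * z ^ (k : ℕ)‖ < 1 := by
    refine lt_of_le_of_lt (norm_sum_le _ _) (lt_of_le_of_lt (Finset.sum_le_sum fun k _ => ?_) hst)
    rw [norm_mul, norm_pow, hz, one_pow, mul_one]
    exact hev _ _
  have h2 : ∑ k, ev i (s k) * z ^ (k : ℕ) = -1 := by linear_combination h
  rw [h2] at h1
  simp at h1

theorem norm_char (x ξ : ℝ) : ‖Complex.exp (Real.pi * Complex.I * x * ξ)‖ = 1 := by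
  rw [show (Real.pi * Complex.I * x * ξ : ℂ) = ((Real.pi * x * ξ : ℝ) : ℂ) * Complex.I by
    push_cast; ring]
  exact Complex.norm_exp_ofReal_mul_I _

theorem FT_integrable {f : ℝ → ℂ} (hf : Integrable f) (ξ : ℝ) :
    Integrable (fun x : ℝ => Complex.exp (Real.pi * Complex.I * x * ξ) * f x) := by
  refine hf.bdd_mul (c := 1) (Continuous.aestronglyMeasurable (by fun_prop)) ?_
  exact Filter.Eventually.of_forall fun x => (norm_char x ξ).le

theorem FT_congr {f g : ℝ → ℂ} (h : f =ᵐ[volume] g) (ξ : ℝ) : FT f ξ = FT g ξ := by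
  refine integral_congr_ae ?_
  filter_upwards [h] with x hx
  rw [hx]

theorem FT_norm_le (f : ℝ → ℂ) (ξ : ℝ) : ‖FT f ξ‖ ≤ ∫ x, ‖f x‖ := by
  refine (norm_integral_le_integral_norm _).trans (le_of_eq ?_)
  simp only [norm_mul, norm_char, one_mul]

theorem FT_add {f g : ℝ → ℂ} (hf : Integrable f) (hg : Integrable g) (ξ : ℝ) :
    FT (fun x => f x + g x) ξ = FT f ξ + FT g ξ := by
  unfold FT
  rw [← integral_add (FT_integrable hf ξ) (FT_integrable hg ξ)]
  simp only [mul_add]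

theorem FT_smul (c : ℂ) (f : ℝ → ℂ) (ξ : ℝ) :
    FT (fun x => c * f x) ξ = c * FT f ξ := by
  unfold FT
  rw [← integral_const_mul]
  congr 1; ext x; ring

theorem FT_zero (ξ : ℝ) : FT (fun _ => 0) ξ = 0 := by simp [FT]

noncomputable abbrev L1R := ℝ →₁[volume] ℂ

noncomputable def FTc (ξ : ℝ) : L1R →L[ℂ] ℂ :=
  LinearMap.mkContinuous
    { toFun := fun g => FT g ξ
      map_add' := fun f g => by
        rw [FT_congr (Lp.coeFn_add f g)]
        exact FT_add (L1.integrable_coeFn f) (L1.integrable_coeFn g) ξ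
      map_smul' := fun c f => by
        rw [FT_congr (Lp.coeFn_smul c f)]
        exact FT_smul c f ξ } 1
    (fun g => by
      rw [one_mul, L1.norm_eq_integral_norm]
      exact FT_norm_le _ _)

theorem FTc_apply (ξ : ℝ) (g : L1R) : FTc ξ g = FT g ξ := rfl

theorem FTc_norm (ξ : ℝ) (g : L1R) : ‖FTc ξ g‖ ≤ ‖g‖ := by
  rw [L1.norm_eq_integral_norm]; exact FT_norm_le _ _

theorem FTc_toL1 (ξ : ℝ) {f : ℝ → ℂ} (hf : Integrable f) : FTc ξ (hf.toL1 f) = FT f ξ :=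
  FT_congr hf.coeFn_toL1 ξ

noncomputable def tau (y : ℝ) (g : L1R) : L1R := DomAddAct.mk (-y) +ᵥ g

theorem tau_norm (y : ℝ) (g : L1R) : ‖tau y g‖ = ‖g‖ := DomAddAct.norm_vadd_Lp _ _

theorem tau_cont (g : L1R) : Continuous fun y => tau y g := by
  unfold tau
  have h : Continuous fun y : ℝ => DomAddAct.mk (-y) :=
    DomAddAct.continuous_mk.comp continuous_neg
  have : Fact ((1 : ENNReal) ≠ ⊤) := ⟨by simp⟩
  exact h.vadd continuous_const

theorem tau_coe (y : ℝ) (g : L1R) : tau y g =ᵐ[volume] fun x => g (-y + x) :=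
  DomAddAct.vadd_Lp_ae_eq _ _

theorem tau_add (y : ℝ) (f g : L1R) : tau y (f + g) = tau y f + tau y g :=
  DomAddAct.vadd_Lp_add _ _ _

theorem tau_smul (y : ℝ) (c : ℂ) (g : L1R) : tau y (c • g) = c • tau y g := by
  apply Lp.ext
  have h1 := (measurePreserving_add_left (volume : Measure ℝ) (-y)).quasiMeasurePreserving.ae_eq_comp
    (Lp.coeFn_smul c g)
  filter_upwards [tau_coe y (c • g), tau_coe y g, h1, Lp.coeFn_smul c (tau y g)] with x a b h d
  rw [a, d, Pi.smul_apply, b]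
  exact h

theorem tau_zero (g : L1R) : tau 0 g = g := by
  apply Lp.ext
  filter_upwards [tau_coe 0 g] with x hx
  rw [hx]; simp

theorem FT_tau (y ξ : ℝ) (g : L1R) :
    FTc ξ (tau y g) = Complex.exp (Real.pi * Complex.I * y * ξ) * FTc ξ g := by
  simp only [FTc_apply]
  rw [FT_congr (tau_coe y g)]
  unfold FT
  rw [← integral_const_mul, ← integral_add_left_eq_self (μ := volume) _ y]
  congr 1; ext x
  rw [← mul_assoc, ← Complex.exp_add]
  congr 2
  · push_cast; ring
  · simp

theorem conv_integrable (f g : L1R) : Integrable (fun y => f y • tau y g) := by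
  have h1 := L1.integrable_coeFn f
  refine Integrable.mono' (h1.norm.mul_const ‖g‖)
    (h1.aestronglyMeasurable.smul (tau_cont g).aestronglyMeasurable) ?_
  exact Filter.Eventually.of_forall fun y => by rw [norm_smul, tau_norm]

noncomputable def conv : L1R →L[ℂ] L1R →L[ℂ] L1R :=
  LinearMap.mkContinuous₂
    (LinearMap.mk₂ ℂ (fun f g : L1R => ∫ y, f y • tau y g)
      (fun f f' g => by
        rw [← integral_add (conv_integrable f g) (conv_integrable f' g)]
        refine integral_congr_ae ?_
        filter_upwards [Lp.coeFn_add f f'] with y hy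
        rw [hy, Pi.add_apply, add_smul])
      (fun c f g => by
        rw [← integral_smul]
        refine integral_congr_ae ?_
        filter_upwards [Lp.coeFn_smul c f] with y hy
        rw [hy, Pi.smul_apply, smul_assoc])
      (fun f g g' => by
        rw [← integral_add (conv_integrable f g) (conv_integrable f g')]
        simp only [tau_add, smul_add])
      (fun c f g => by
        rw [← integral_smul]
        simp only [tau_smul, smul_comm c])) 1
    (fun f g => by
      rw [one_mul, L1.norm_eq_integral_norm f, LinearMap.mk₂_apply, ← integral_mul_const]
      refine (norm_integral_le_integral_norm _).trans (le_of_eq ?_)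
      simp only [norm_smul, tau_norm])

theorem conv_apply (f g : L1R) : conv f g = ∫ y, f y • tau y g := rfl

theorem FT_conv (ξ : ℝ) (f g : L1R) : FTc ξ (conv f g) = FTc ξ f * FTc ξ g := by
  rw [conv_apply, ← ContinuousLinearMap.integral_comp_comm _ (conv_integrable f g)]
  simp only [map_smul, FT_tau]
  rw [FTc_apply ξ f, FT, ← integral_mul_const]
  congr 1; ext y
  rw [smul_eq_mul]; ring

open scoped FourierTransform in
theorem exists_bump : ∃ V : ℝ → ℂ, Integrable V ∧ ∀ ξ : ℝ, |ξ| < 1 → FT V ξ = 1 := by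
  let b : ContDiffBump (0 : ℝ) := ⟨1, 2, one_pos, one_lt_two⟩
  have hc : HasCompactSupport (fun x => ((b x : ℝ) : ℂ)) :=
    b.hasCompactSupport.comp_left Complex.ofReal_zero
  have hd : ContDiff ℝ (⊤ : ℕ∞) (fun x => ((b x : ℝ) : ℂ)) :=
    Complex.ofRealCLM.contDiff.comp b.contDiff
  let φ : SchwartzMap ℝ ℂ := hc.toSchwartzMap hd
  refine ⟨(𝓕⁻ φ : SchwartzMap ℝ ℂ), SchwartzMap.integrable (μ := volume) _, fun ξ hξ => ?_⟩
  have h1 : FT ((𝓕⁻ φ : SchwartzMap ℝ ℂ)) ξ = (𝓕 (𝓕⁻ φ : SchwartzMap ℝ ℂ)) (-ξ / 2) := by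
    rw [SchwartzMap.fourier_coe, Real.fourier_eq']
    unfold FT
    congr 1; ext x
    rw [smul_eq_mul]
    congr 2
    simp
    ring
  rw [h1, FourierTransform.fourier_fourierInv_eq]
  show ((b (-ξ / 2) : ℝ) : ℂ) = 1
  rw [b.one_of_mem_closedBall]
  · simp
  · simp only [Metric.mem_closedBall, dist_zero_right, Real.norm_eq_abs, abs_div, abs_neg]
    norm_num
    show |ξ| / 2 ≤ 1
    linarith

noncomputable def Wf (V : ℝ → ℂ) (ξ₀ ε : ℝ) : ℝ → ℂ := fun x =>
  ε * (Complex.exp (-(Real.pi * Complex.I * x * ξ₀)) * V (ε * x))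

theorem norm_char_neg (x ξ : ℝ) : ‖Complex.exp (-(Real.pi * Complex.I * x * ξ))‖ = 1 := by
  rw [Complex.exp_neg, norm_inv, norm_char, inv_one]

theorem Wf_integrable {V : ℝ → ℂ} (hV : Integrable V) (ξ₀ : ℝ) {ε : ℝ} (hε : 0 < ε) :
    Integrable (Wf V ξ₀ ε) := by
  refine Integrable.const_mul ?_ _
  refine (hV.comp_mul_left' hε.ne').bdd_mul (c := 1) (Continuous.aestronglyMeasurable (by fun_prop)) ?_
  exact Filter.Eventually.of_forall fun x => (norm_char_neg x ξ₀).le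

theorem Wf_FT (V : ℝ → ℂ) (ξ₀ : ℝ) {ε : ℝ} (hε : 0 < ε) (ξ : ℝ) :
    FT (Wf V ξ₀ ε) ξ = FT V ((ξ - ξ₀) / ε) := by
  have h := Measure.integral_comp_mul_left
    (fun x : ℝ => Complex.exp (Real.pi * Complex.I * x * ((ξ - ξ₀) / ε : ℝ)) * V x) ε
  unfold FT Wf
  have h2 : ∀ x : ℝ, Complex.exp (Real.pi * Complex.I * x * ξ) *
      (ε * (Complex.exp (-(Real.pi * Complex.I * x * ξ₀)) * V (ε * x))) =
      ε * (Complex.exp (Real.pi * Complex.I * (ε * x : ℝ) * ((ξ - ξ₀) / ε : ℝ)) * V (ε * x)) := by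
    intro x
    rw [show (Real.pi * Complex.I * (ε * x : ℝ) * ((ξ - ξ₀) / ε : ℝ) : ℂ) =
      Real.pi * Complex.I * x * ξ + (-(Real.pi * Complex.I * x * ξ₀)) by
        have : (ε : ℂ) ≠ 0 := by exact_mod_cast hε.ne'
        push_cast; field_simp; ring, Complex.exp_add]
    ring
  simp only [h2]
  rw [integral_const_mul, h, abs_of_pos (inv_pos.mpr hε), Complex.real_smul, ← mul_assoc]
  have : (ε : ℂ) ≠ 0 := by exact_mod_cast hε.ne'
  push_cast
  rw [mul_inv_cancel₀ this, one_mul]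

theorem tau_Wf {V : ℝ → ℂ} (hV : Integrable V volume) (ξ₀ : ℝ) {ε : ℝ} (hε : 0 < ε) (y : ℝ) :
    ‖tau y ((Wf_integrable hV ξ₀ hε).toL1 (Wf V ξ₀ ε)) -
      Complex.exp (Real.pi * Complex.I * y * ξ₀) • (Wf_integrable hV ξ₀ hε).toL1 _‖ =
    ‖tau (ε * y) (hV.toL1 V) - hV.toL1 V‖ := by
  have hW := Wf_integrable hV ξ₀ hε
  have ht : ∀ (z : ℝ) (g : ℝ → ℂ) (hg : Integrable g volume),
      tau z (hg.toL1 g) =ᵐ[volume] fun x => g (-z + x) := by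
    intro z g hg
    have h1 := (measurePreserving_add_left (volume : Measure ℝ)
      (-z)).quasiMeasurePreserving.ae_eq_comp (Integrable.coeFn_toL1 hg)
    filter_upwards [tau_coe z (hg.toL1 g), h1] with x a b
    rw [a]; exact b
  rw [L1.norm_eq_integral_norm, L1.norm_eq_integral_norm]
  have e1 : ∫ x, ‖(tau (ε * y) (hV.toL1 V) - hV.toL1 V : L1R) x‖ =
      ∫ x, ‖V (-(ε * y) + x) - V x‖ := by
    refine integral_congr_ae ?_
    filter_upwards [Lp.coeFn_sub (tau (ε * y) (hV.toL1 V)) (hV.toL1 V), ht (ε * y) V hV,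
      hV.coeFn_toL1] with x a b c
    rw [a, Pi.sub_apply, b, c]
  rw [e1]
  have h := Measure.integral_comp_mul_left (fun x : ℝ => ‖V (-(ε * y) + x) - V x‖) ε
  rw [abs_of_pos (inv_pos.mpr hε), smul_eq_mul] at h
  have h' : ∫ x, ‖V (-(ε * y) + x) - V x‖ = ∫ x, ε * ‖V (-(ε * y) + ε * x) - V (ε * x)‖ := by
    rw [integral_const_mul, h, ← mul_assoc, mul_inv_cancel₀ hε.ne', one_mul]
  rw [h']
  refine integral_congr_ae ?_
  filter_upwards [Lp.coeFn_sub (tau y (hW.toL1 _))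
    (Complex.exp (Real.pi * Complex.I * y * ξ₀) • hW.toL1 _), ht y _ hW,
    Lp.coeFn_smul (Complex.exp (Real.pi * Complex.I * y * ξ₀)) (hW.toL1 _),
    hW.coeFn_toL1] with x a b c d
  rw [a, Pi.sub_apply, b, c, Pi.smul_apply, d]
  unfold Wf
  have : Complex.exp (-(Real.pi * Complex.I * (-y + x : ℝ) * ξ₀)) =
      Complex.exp (Real.pi * Complex.I * y * ξ₀) * Complex.exp (-(Real.pi * Complex.I * x * ξ₀)) := by
    rw [← Complex.exp_add]; congr 1; push_cast; ring
  rw [this, show ε * (-y + x) = -(ε * y) + ε * x by ring]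
  rw [show ∀ A B C D E : ℂ, A * (B * C * D) - B • (A * (C * E)) = A * (B * (C * (D - E))) by
    intros; simp only [smul_eq_mul]; ring]
  rw [norm_mul, norm_mul, norm_mul, norm_char, norm_char_neg, one_mul, one_mul, Complex.norm_real,
    Real.norm_of_nonneg hε.le]

theorem conv_approx {V : ℝ → ℂ} (hV : Integrable V) (ξ₀ : ℝ) (f : L1R) {δ : ℝ} (hδ : 0 < δ) :
    ∀ᶠ ε in nhdsWithin (0 : ℝ) (Set.Ioi 0), ∀ hε : 0 < ε,
      ‖conv f ((Wf_integrable hV ξ₀ hε).toL1 _) -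
        FTc ξ₀ f • (Wf_integrable hV ξ₀ hε).toL1 _‖ < δ := by
  have hf := L1.integrable_coeFn f
  have hT : Filter.Tendsto (fun ε : ℝ => ∫ y, ‖f y‖ * ‖tau (ε * y) (hV.toL1 V) - hV.toL1 V‖)
      (nhdsWithin (0 : ℝ) (Set.Ioi 0)) (nhds (∫ _ : ℝ, (0 : ℝ))) := by
    refine tendsto_integral_filter_of_dominated_convergence
      (fun y => ‖f y‖ * (2 * ‖hV.toL1 V‖)) ?_ ?_ (hf.norm.mul_const _) ?_
    · refine Filter.Eventually.of_forall fun ε => hf.norm.aestronglyMeasurable.mul ?_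
      refine Continuous.aestronglyMeasurable ?_
      exact (((tau_cont (hV.toL1 V)).comp (continuous_const.mul continuous_id)).sub
        continuous_const).norm
    · refine Filter.Eventually.of_forall fun ε => Filter.Eventually.of_forall fun y => ?_
      rw [norm_mul, norm_norm, norm_norm]
      gcongr
      refine (norm_sub_le _ _).trans ?_
      rw [tau_norm]; linarith
    · refine Filter.Eventually.of_forall fun y => ?_
      have hc : Continuous fun ε : ℝ => ‖f y‖ * ‖tau (ε * y) (hV.toL1 V) - hV.toL1 V‖ :=
        continuous_const.mul (((tau_cont (hV.toL1 V)).comp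
          (continuous_id.mul continuous_const)).sub continuous_const).norm
      have := (hc.tendsto 0).mono_left (nhdsWithin_le_nhds (s := Set.Ioi (0 : ℝ)))
      simpa [tau_zero] using this
  rw [integral_zero] at hT
  filter_upwards [hT.eventually (gt_mem_nhds hδ)] with ε h hε
  refine lt_of_le_of_lt ?_ h
  set W := (Wf_integrable hV ξ₀ hε).toL1 _ with hW
  have e1 : FTc ξ₀ f • W = ∫ y : ℝ, (Complex.exp (Real.pi * Complex.I * y * ξ₀) * f y) • W := by
    rw [integral_smul_const]; rfl
  rw [e1, conv_apply, ← integral_sub (conv_integrable f W) ((FT_integrable hf ξ₀).smul_const W)]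
  refine (norm_integral_le_integral_norm _).trans (le_of_eq ?_)
  congr 1; ext y
  rw [← tau_Wf hV ξ₀ hε y, ← norm_smul, smul_sub, smul_smul, mul_comm (f y) (Complex.exp _)]

theorem vanish_on_pik (n : ℕ) (hn : 2 ≤ n) (Λ : Set (ℝ × ℝ))
    (hclosed : IsClosed Λ) (hper : Periodic2 Λ)
    (f : Fin n → ℝ → ℂ) (hf : ∀ m, MeasureTheory.Integrable (f m))
    (heq : ∀ ξ η : ℝ, (ξ, η) ∈ Λ →
      ∑ m : Fin n, cexpEta η ^ (m : ℕ) * FT (f m) ξ = 0)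
    (k : ℕ) (hk2 : 2 ≤ k) (hkn : k ≤ n - 1)
    (ξ₀ : ℝ) (hξ₀ : ξ₀ ∈ projExact Λ k \ projStarSu Λ n k) :
    ∀ j, FT (f j) ξ₀ = 0 := by
  by_contra hcon
  push Not at hcon
  -- the largest index with non-vanishing coefficient
  obtain ⟨M, hM0, hMmax⟩ : ∃ M : Fin n, FT (f M) ξ₀ ≠ 0 ∧ ∀ j, M < j → FT (f j) ξ₀ = 0 := by
    classical
    let S : Finset (Fin n) := Finset.univ.filter fun j => FT (f j) ξ₀ ≠ 0
    have hS : S.Nonempty := by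
      obtain ⟨j, hj⟩ := hcon
      exact ⟨j, by simp [S, hj]⟩
    refine ⟨S.max' hS, ?_, fun j hj => ?_⟩
    · have := S.max'_mem hS
      simpa [S] using this
    · by_contra hne
      exact absurd (S.le_max' j (by simp [S, hne])) (not_le.mpr hj)
  obtain ⟨m, hm⟩ := M
  obtain ⟨a, rfl⟩ : ∃ a, n = a + m := ⟨n - m, by omega⟩
  have ha : 0 < a := by omega
  set C := FT (f ⟨m, hm⟩) ξ₀ with hC
  let F : ℕ → L1R := fun l => if h : l < a + m then C⁻¹ • (hf ⟨l, h⟩).toL1 _ else 0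
  have hF : ∀ (l : Fin (a + m)) ξ, FTc ξ (F l) = C⁻¹ * FT (f l) ξ := by
    intro l ξ
    simp only [F, l.2, dif_pos, map_smul, FTc_toL1, smul_eq_mul]
  have hFm : FTc ξ₀ (F m) = 1 := by
    have := hF ⟨m, hm⟩ ξ₀
    simp only at this
    rw [this, ← hC, inv_mul_cancel₀ hM0]
  have hFbig : ∀ l, m < l → FTc ξ₀ (F l) = 0 := by
    intro l hl
    by_cases h : l < a + m
    · have := hF ⟨l, h⟩ ξ₀
      simp only at this
      rw [this, hMmax ⟨l, h⟩ hl, mul_zero]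
    · simp [F, h]
  obtain ⟨δ, hδ, hfac⟩ := wfactor conv FTc FTc_norm FT_conv a m (fun j => FTc ξ₀ (F j))
  obtain ⟨V, hV, hV1⟩ := exists_bump
  have hev : ∀ᶠ ε in nhdsWithin (0 : ℝ) (Set.Ioi 0), 0 < ε ∧ ∀ l : Fin (a + m), ∀ hε : 0 < ε,
      ‖conv (F l) ((Wf_integrable hV ξ₀ hε).toL1 _) -
        FTc ξ₀ (F l) • (Wf_integrable hV ξ₀ hε).toL1 _‖ < δ :=
    Filter.Eventually.and self_mem_nhdsWithin
      (Filter.eventually_all.mpr fun l => conv_approx hV ξ₀ (F l) hδ)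
  obtain ⟨ε, hε, hr⟩ := hev.exists
  replace hr := fun l => hr l hε
  set W : L1R := (Wf_integrable hV ξ₀ hε).toL1 _ with hW
  obtain ⟨t, ht⟩ := hfac (fun l => conv (F l) W - FTc ξ₀ (F l) • W)
    ((pi_norm_lt_iff hδ).mpr hr)
  have hW1 : ∀ ξ ∈ Set.Ioo (ξ₀ - ε) (ξ₀ + ε), FTc ξ W = 1 := by
    intro ξ hξ
    rw [hW, FTc_toL1, Wf_FT V ξ₀ hε]
    apply hV1
    rw [abs_div, abs_of_pos hε, div_lt_one hε, abs_lt]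
    constructor <;> linarith [hξ.1, hξ.2]
  refine hξ₀.2 ⟨hξ₀.1, ξ₀ - ε, ξ₀ + ε, ⟨by linarith, by linarith⟩, ?_⟩
  let g : ℕ → L1R := fun i =>
    if h : a - 1 ≤ i ∧ i - (a - 1) < m then
      FTc ξ₀ (F (i - (a - 1))) • W + t ⟨i - (a - 1), h.2⟩ else 0
  refine ⟨fun i => g i, fun i => L1.integrable_coeFn _, fun ξ hξ η hη => ?_⟩
  set z := cexpEta η with hz
  have hz1 : ‖z‖ = 1 := by
    rw [hz, cexpEta]
    have := norm_char η 1
    simpa using this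
  have hroot := heq ξ η hη.2
  have hWξ := hW1 ξ hξ.1
  have key := ht ξ z hz1 (by
    simp only [map_sub, map_smul, FT_conv, hWξ, smul_eq_mul, mul_one, sub_mul,
      Finset.sum_sub_distrib]
    have e1 : ∑ l : Fin (a + m), FTc ξ (F l) * z ^ (l : ℕ) = 0 := by
      have : ∑ l : Fin (a + m), FTc ξ (F l) * z ^ (l : ℕ) =
          C⁻¹ * ∑ l : Fin (a + m), z ^ (l : ℕ) * FT (f l) ξ := by
        rw [Finset.mul_sum]
        refine Finset.sum_congr rfl fun l _ => ?_
        rw [hF]; ring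
      rw [this, hroot, mul_zero]
    have e2 : ∑ l : Fin (a + m), FTc ξ₀ (F l) * z ^ (l : ℕ) =
        ∑ j : Fin m, FTc ξ₀ (F j) * z ^ (j : ℕ) + z ^ m := by
      rw [Fin.sum_univ_eq_sum_range (fun l => FTc ξ₀ (F l) * z ^ l),
        Fin.sum_univ_eq_sum_range (fun l => FTc ξ₀ (F l) * z ^ l), add_comm a m,
        Finset.sum_range_add]
      congr 1
      rw [Finset.sum_eq_single 0]
      · simp [hFm]
      · intro b _ hb
        rw [hFbig _ (by omega), zero_mul]
      · intro h; simp at h; omega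
    rw [e1, e2]; ring)
  have hsum : ∑ i : Fin (a + m - 1), FT (g i) ξ * z ^ (i : ℕ) =
      z ^ (a - 1) * ∑ j : Fin m, (FTc ξ₀ (F j) + FTc ξ (t j)) * z ^ (j : ℕ) := by
    rw [Fin.sum_univ_eq_sum_range (fun i => FT (g i) ξ * z ^ i),
      show a + m - 1 = (a - 1) + m by omega, Finset.sum_range_add]
    rw [Finset.sum_eq_zero, zero_add, Finset.mul_sum,
      ← Fin.sum_univ_eq_sum_range (fun i => FT (g (a - 1 + i)) ξ * z ^ (a - 1 + i))]
    · refine Finset.sum_congr rfl fun j _ => ?_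
      have : FT (g (a - 1 + j)) ξ = FTc ξ₀ (F j) + FTc ξ (t j) := by
        rw [← FTc_apply]
        have h1 : a ≤ a - 1 + (j : ℕ) + 1 := by omega
        simp [g, hWξ, h1]
      rw [this, pow_add]; ring
    · intro i hi
      have hi' : ¬ (a - 1 ≤ i ∧ i - (a - 1) < m) := by
        have := Finset.mem_range.mp hi
        omega
      rw [← FTc_apply]
      simp only [g, dif_neg hi', map_zero, zero_mul]
  rw [hsum, show a + m - 1 = (a - 1) + m by omega, pow_add]
  linear_combination z ^ (a - 1) * key
end

section
/- Let n ≥ 2 be an integer and let Λ ⊂ ℝ² be a closed set that is 2-periodic with respect to the second variable. Let f_1, …, f_n ∈ L¹(ℝ) satisfy f̂_1(ξ) + e^{πiη} f̂_2(ξ) + ⋯ + e^{(n−1)πiη} f̂_n(ξ) = 0 for all (ξ, η) ∈ Λ. If ξ_0 ∈ Π^n(Λ), then f̂_j(ξ_0) = 0 for every j = 1, …, n. -/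
open MeasureTheory Complex

theorem cexpEta_inj {x y : ℝ} (hx : x ∈ Set.Ico (0 : ℝ) 2) (hy : y ∈ Set.Ico (0 : ℝ) 2)
    (h : cexpEta x = cexpEta y) : x = y := by
  unfold cexpEta at h
  obtain ⟨k, hk⟩ := Complex.exp_eq_exp_iff_exists_int.1 h
  have hpi : (Real.pi * Complex.I : ℂ) ≠ 0 :=
    mul_ne_zero (by exact_mod_cast Real.pi_ne_zero) Complex.I_ne_zero
  have h1 : (x : ℂ) = y + k * 2 := by
    apply mul_left_cancel₀ hpi
    rw [hk]; ring
  have h2 : x = y + k * 2 := by exact_mod_cast h1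
  have h3 : k < 1 := by
    have : (k : ℝ) < 1 := by linarith [hx.2, hy.1]
    exact_mod_cast this
  have h4 : -1 < k := by
    have : (-1 : ℝ) < k := by linarith [hx.1, hy.2]
    exact_mod_cast this
  have h5 : k = 0 := by omega
  simpa [h5] using h2

theorem vanish_on_pin (n : ℕ) (hn : 2 ≤ n) (Λ : Set (ℝ × ℝ))
    (hclosed : IsClosed Λ) (hper : Periodic2 Λ)
    (f : Fin n → ℝ → ℂ) (hf : ∀ m, MeasureTheory.Integrable (f m))
    (heq : ∀ ξ η : ℝ, (ξ, η) ∈ Λ →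
      ∑ m : Fin n, cexpEta η ^ (m : ℕ) * FT (f m) ξ = 0)
    (ξ₀ : ℝ) (hξ₀ : ξ₀ ∈ projAtLeast Λ n) :
    ∀ j, FT (f j) ξ₀ = 0 := by
  obtain ⟨t, hts, htc⟩ := Set.exists_subset_encard_eq hξ₀.2
  have htf : t.Finite := Set.finite_of_encard_eq_coe htc
  have hcard : htf.toFinset.card = n := by
    rw [htf.encard_eq_coe_toFinset_card] at htc
    exact_mod_cast htc
  let e := htf.toFinset.equivFinOfCardEq hcard
  have hmem : ∀ k, ((e.symm k : htf.toFinset) : ℝ) ∈ Img Λ ξ₀ := fun k =>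
    hts (htf.mem_toFinset.1 (e.symm k).2)
  have hinj : Function.Injective (fun k : Fin n => cexpEta ((e.symm k : htf.toFinset) : ℝ)) := by
    intro a b hab
    apply e.symm.injective
    apply Subtype.ext
    have ha := (hmem a).1
    have hb := (hmem b).1
    exact cexpEta_inj ha hb hab
  have := Matrix.eq_zero_of_forall_index_sum_pow_mul_eq_zero hinj
    (v := fun m => FT (f m) ξ₀) (fun k => heq ξ₀ _ (hmem k).2)
  exact fun j => congrFun this j
end

section
/- Let n ≥ 2 be an integer, Γ = ℝ × {0, 1, …, n−1}, and let Λ ⊂ ℝ² be a closed set that is 2-periodic with respect to the second variable. For 2 ≤ k ≤ n−2 define Π̃^{k*}_{ne}(Λ) = Π^{k*}_{su}(Λ) ∩ {ξ ∈ Π^k(Λ) : τ ∈ P^{Π^k(Λ),ξ}_2}, where τ(ξ) = ∏_{p=2}^{k} ∏_{q=1}^{p−1} (e^{πiη_p} − e^{πiη_q})² with η_1 < ⋯ < η_k the elements of Img(ξ). If (Γ, Λ) is a Heisenberg uniqueness pair, then the set Π^n(Λ) ∪ (Π^1(Λ) \ Π^{1*}(Λ)) ∪ (Π^{n−1}(Λ)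 \ Π^{(n−1)*}(Λ)) ∪ ⋃_{j=2}^{n−2} (Π^j(Λ) \ Π̃^{j*}_{ne}(Λ)) is dense in ℝ. -/
open MeasureTheory Complex

/-- `τ` agrees on `Π^k(Λ)` with `ξ ↦ ∏_{q<p} (e^{πiη_p} - e^{πiη_q})²`, where
`η_1 < ⋯ < η_k` enumerate `Img(ξ)`. -/
def tauSpec (Λ : Set (ℝ × ℝ)) (k : ℕ) (τ : ℝ → ℂ) : Prop :=
  ∀ ξ' ∈ projExact Λ k, ∀ η : Fin k → ℝ, StrictMono η → Set.range η = Img Λ ξ' →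
    τ ξ' = ∏ p : Fin k, ∏ q : Fin k,
      if (q : ℕ) < (p : ℕ) then (cexpEta (η p) - cexpEta (η q)) ^ 2 else 1

/-- `Π̃^{k*}_{ne}(Λ) = Π^{k*}_{su}(Λ) ∩ {ξ ∈ Π^k(Λ) : τ ∈ P^{Π^k(Λ),ξ}_2}`. -/
def projStarNeTilde (Λ : Set (ℝ × ℝ)) (n k : ℕ) : Set ℝ :=
  projStarSu Λ n k ∩
    {ξ | ξ ∈ projExact Λ k ∧ ∃ τ : ℝ → ℂ, tauSpec Λ k τ ∧ Pmem (projExact Λ k) ξ 2 τ}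

open scoped FourierTransform Convolution Topology

lemma FT_eq (f : ℝ → ℂ) (ξ : ℝ) : FT f ξ = 𝓕 f (-ξ / 2) := by
  rw [Real.fourier_real_eq_integral_exp_smul, FT]
  congr 1
  ext x
  rw [smul_eq_mul]
  congr 2
  push_cast
  ring

lemma FT_continuous {f : ℝ → ℂ} (hf : Integrable f) : Continuous (FT f) := by
  have h : Continuous (𝓕 f) :=
    VectorFourier.fourierIntegral_continuous Real.continuous_fourierChar
      (by exact continuous_inner) hf
  have : FT f = fun ξ => 𝓕 f (-ξ / 2) := funext (FT_eq f)
  rw [this]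
  exact h.comp (by fun_prop)

lemma FT_conv_s13 {f g : ℝ → ℂ} (hf : Integrable f) (hg : Integrable g) :
    ∃ h : ℝ → ℂ, Integrable h ∧ ∀ ξ, FT h ξ = FT f ξ * FT g ξ := by
  refine ⟨f ⋆[ContinuousLinearMap.mul ℂ ℂ] g, hf.integrable_convolution _ hg, fun ξ => ?_⟩
  rw [FT_eq, FT_eq, FT_eq, Real.fourier_mul_convolution_eq hf hg]

lemma exists_FT_bump {U : Set ℝ} {x : ℝ} (hU : U ∈ 𝓝 x) :
    ∃ h : ℝ → ℂ, Integrable h ∧ (∀ ξ, ξ ∉ U → FT h ξ = 0) ∧ FT h x ≠ 0 := by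
  have hV : (fun w : ℝ => -2 * w) ⁻¹' U ∈ 𝓝 (-x / 2) := by
    have : Continuous (fun w : ℝ => -2 * w) := by fun_prop
    apply this.continuousAt
    convert hU using 1
    ring_nf
  obtain ⟨f, hf1, hf2, hf3, -, hf5⟩ := exists_contDiff_tsupport_subset (n := ⊤) hV
  let g : ℝ → ℂ := fun w => (f w : ℂ)
  have hg2 : HasCompactSupport g := hf2.comp_left (g := fun r : ℝ => (r : ℂ)) (by simp)
  have hg3 : ContDiff ℝ ((⊤ : ℕ∞) : WithTop ℕ∞) g := Complex.ofRealCLM.contDiff.comp hf3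
  let G := hg2.toSchwartzMap hg3
  have key : ∀ ξ, FT (𝓕⁻ G : SchwartzMap ℝ ℂ) ξ = (f (-ξ / 2) : ℂ) := by
    intro ξ
    rw [FT_eq, ← SchwartzMap.fourier_coe]
    simp [G, g]
  refine ⟨(𝓕⁻ G : SchwartzMap ℝ ℂ), SchwartzMap.integrable _, ?_, ?_⟩
  · intro ξ hξ
    rw [key]
    have : f (-ξ / 2) = 0 := by
      apply image_eq_zero_of_notMem_tsupport
      intro h
      apply hξ
      have := hf1 h
      simp only [Set.mem_preimage] at this
      convert this using 1
      ring
    simp [this]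
  · rw [key, hf5]; simp

lemma cexpEta_continuous : Continuous cexpEta := by
  unfold cexpEta; fun_prop

lemma cexpEta_add_two (η : ℝ) (m : ℤ) : cexpEta (η + m * 2) = cexpEta η := by
  unfold cexpEta
  rw [Complex.exp_eq_exp_iff_exists_int]
  refine ⟨m, ?_⟩
  push_cast
  ring

lemma cexpEta_inj_s13 {η η' : ℝ} (h : η ∈ Set.Ico (0:ℝ) 2) (h' : η' ∈ Set.Ico (0:ℝ) 2)
    (he : cexpEta η = cexpEta η') : η = η' := by
  unfold cexpEta at he
  rw [Complex.exp_eq_exp_iff_exists_int] at he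
  obtain ⟨m, hm⟩ := he
  have h1 : (Real.pi * Complex.I) * (η : ℂ) = (Real.pi * Complex.I) * ((η' + m * 2 : ℝ) : ℂ) := by
    rw [hm]; push_cast; ring
  have h2 := mul_left_cancel₀ (by simp [Real.pi_ne_zero]) h1
  have h3 : η = η' + m * 2 := by exact_mod_cast h2
  obtain ⟨a, b⟩ := h
  obtain ⟨c, d⟩ := h'
  have h4 : (m : ℝ) < 1 := by linarith
  have h5 : (-1 : ℝ) < m := by linarith
  have h6 : m = 0 := by
    have : m < 1 := by exact_mod_cast h4
    have : -1 < m := by exact_mod_cast h5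
    omega
  simp [h3, h6]

lemma per_int {Λ : Set (ℝ × ℝ)} (hper : Periodic2 Λ) (m : ℤ) (ξ η : ℝ) :
    (ξ, η + m * 2) ∈ Λ ↔ (ξ, η) ∈ Λ := by
  induction m with
  | zero => simp
  | succ i ih => rw [← ih, hper ξ (η + (i : ℤ) * 2)]; push_cast; ring_nf
  | pred i ih => rw [← ih, hper ξ (η + (-(i : ℤ) - 1 : ℤ) * 2)]; push_cast; ring_nf

lemma exists_Img {Λ : Set (ℝ × ℝ)} (hper : Periodic2 Λ) {ξ η : ℝ} (h : (ξ, η) ∈ Λ) :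
    ∃ η' ∈ Img Λ ξ, cexpEta η' = cexpEta η := by
  have hm : η = toIcoMod (two_pos (α := ℝ)) 0 η + (toIcoDiv (two_pos (α := ℝ)) 0 η : ℤ) * 2 := by
    have := toIcoMod_add_toIcoDiv_zsmul (two_pos (α := ℝ)) 0 η
    rw [zsmul_eq_mul] at this
    exact this.symm
  refine ⟨toIcoMod (two_pos (α := ℝ)) 0 η, ⟨?_, ?_⟩, ?_⟩
  · simpa using toIcoMod_mem_Ico (two_pos (α := ℝ)) 0 η
  · rw [hm, per_int hper] at h; exact h
  · conv_rhs => rw [hm]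
    rw [cexpEta_add_two]

def SepAt (Λ : Set (ℝ × ℝ)) (k : ℕ) (ξ : ℝ) : Prop :=
  ∃ ε : ℝ, 0 < ε ∧ ∀ᶠ x in 𝓝 ξ, (Img Λ x).encard = k →
    ∀ η ∈ Img Λ x, ∀ η' ∈ Img Λ x, η ≠ η' → ε ≤ ‖cexpEta η - cexpEta η'‖

def LocPoly (n : ℕ) (Λ : Set (ℝ × ℝ)) (k : ℕ) (ξ : ℝ) : Prop :=
  ∃ φ : Fin (n - 1) → ℝ → ℂ, (∀ i, Integrable (φ i)) ∧
    ∀ᶠ x in 𝓝 ξ, (Img Λ x).encard = k → ∀ η ∈ Img Λ x,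
      (∑ i : Fin (n - 1), FT (φ i) x * cexpEta η ^ (i : ℕ)) + cexpEta η ^ (n - 1) = 0

lemma exists_enum {S : Set ℝ} {k : ℕ} (h : S.encard = k) :
    ∃ η : Fin k → ℝ, StrictMono η ∧ Set.range η = S := by
  have hf : S.Finite := Set.finite_of_encard_eq_coe h
  have hc : hf.toFinset.card = k := by
    have := hf.encard_eq_coe_toFinset_card
    rw [h] at this
    exact_mod_cast this.symm
  refine ⟨hf.toFinset.orderEmbOfFin hc, (hf.toFinset.orderEmbOfFin hc).strictMono, ?_⟩
  simp

lemma sep_of_continuous {Y : Type*} [TopologicalSpace Y] {K : Set Y} (hK : IsCompact K)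
    (R : ℝ → Y → ℝ) (hR : Continuous (fun p : ℝ × Y => R p.1 p.2)) (ξ : ℝ)
    (hpos : ∀ y ∈ K, 0 < R ξ y) :
    ∃ ε : ℝ, 0 < ε ∧ ∀ᶠ x in 𝓝 ξ, ∀ y ∈ K, ε ≤ R x y := by
  have h := hK.eventually_forall_of_forall_eventually (x₀ := ((ξ, 0) : ℝ × ℝ))
    (P := fun q y => q.2 < R q.1 y) (by
      intro y hy
      have hc : Continuous (fun z : (ℝ × ℝ) × Y => R z.1.1 z.2) :=
        hR.comp (f := fun z : (ℝ × ℝ) × Y => (z.1.1, z.2)) (by fun_prop)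
      have h2 : Continuous (fun z : (ℝ × ℝ) × Y => z.1.2) := by fun_prop
      exact (isOpen_lt h2 hc).mem_nhds (by simpa using hpos y hy))
  rw [nhds_prod_eq] at h
  obtain ⟨pa, ha, pb, hb, hab⟩ := Filter.eventually_prod_iff.1 h
  obtain ⟨ε, hε, hε'⟩ := (((Filter.Eventually.filter_mono nhdsWithin_le_nhds hb).and
    (self_mem_nhdsWithin (s := Set.Ioi (0:ℝ)))).exists)
  exact ⟨ε, hε', ha.mono fun x hx y hy => (hab hx hε y hy).le⟩

lemma deriv_ne {N : ℕ} (p : Polynomial ℂ) (hp : p.Monic) (hd : p.natDegree = N)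
    (S : Finset ℂ) (hS : S.card = N) (hr : ∀ z ∈ S, p.eval z = 0) (z : ℂ) (hz : p.eval z = 0) :
    p.derivative.eval z ≠ 0 := by
  intro h
  have h1 := (Polynomial.one_lt_rootMultiplicity_iff_isRoot (t := z) hp.ne_zero).2 ⟨hz, h⟩
  rw [← Polynomial.count_roots] at h1
  have hle : S.val ≤ p.roots := by
    rw [Multiset.le_iff_subset S.nodup]
    intro w hw
    exact (Polynomial.mem_roots hp.ne_zero).2 (hr w hw)
  have : S.val = p.roots := Multiset.eq_of_le_of_card_le hle (by
    rw [Finset.card_val, hS, ← hd]; exact p.card_roots')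
  rw [← this] at h1
  have := Multiset.nodup_iff_count_le_one.1 S.nodup z
  omega

lemma sep_su {n : ℕ} {Λ : Set (ℝ × ℝ)} {ξ : ℝ} (hξ : (Img Λ ξ).encard = ((n - 1 : ℕ) : ℕ∞))
    (h : LocPoly n Λ (n - 1) ξ) : SepAt Λ (n - 1) ξ := by
  obtain ⟨φ, hφ, hev⟩ := h
  generalize n - 1 = N at *
  let G : ℕ → ℂ → ℂ → ℂ := fun i z w => ∑ j ∈ Finset.range i, z ^ j * w ^ (i - 1 - j)
  let P : ℝ → ℂ → ℂ := fun x z => (∑ i : Fin N, FT (φ i) x * z ^ (i : ℕ)) + z ^ N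
  let Q : ℝ → ℂ → ℂ → ℂ := fun x z w => (∑ i : Fin N, FT (φ i) x * G i z w) + G N z w
  have hG : ∀ i z w, G i z w * (z - w) = z ^ i - w ^ i := fun i z w => by
    simpa [G] using (Commute.all z w).geom_sum₂_mul i
  have hQ : ∀ x z w, Q x z w * (z - w) = P x z - P x w := by
    intro x z w
    simp only [Q, P, add_mul, Finset.sum_mul, mul_assoc, hG]
    simp only [mul_sub, Finset.sum_sub_distrib]
    ring
  let p : Polynomial ℂ := Polynomial.X ^ N + ∑ i : Fin N, Polynomial.C (FT (φ i) ξ) * Polynomial.X ^ (i : ℕ)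
  have hdeg : (∑ i : Fin N, Polynomial.C (FT (φ i) ξ) * Polynomial.X ^ (i : ℕ)).degree < (N : WithBot ℕ) :=
    Polynomial.degree_sum_fin_lt _
  have hpm : p.Monic := Polynomial.monic_X_pow_add hdeg
  have hpd : p.natDegree = N := by
    apply Polynomial.natDegree_eq_of_degree_eq_some
    rw [Polynomial.degree_add_eq_left_of_degree_lt] <;> simp [hdeg]
  have hpe : ∀ z, p.eval z = P ξ z := by
    intro z; simp [p, P, Polynomial.eval_finsetSum, add_comm]
  have hpde : ∀ z, p.derivative.eval z = Q ξ z z := by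
    intro z
    have hGz : ∀ i, G i z z = i * z ^ (i - 1) := fun i => by
      simpa [G] using (geom_sum₂_self z i)
    simp only [p, Q, Polynomial.derivative_add, Polynomial.derivative_sum, Polynomial.eval_add,
      Polynomial.eval_finsetSum, hGz]
    simp [add_comm, Polynomial.derivative_X_pow]
  obtain ⟨η₀, hη₀, hη₀r⟩ := exists_enum hξ
  have hinj : Function.Injective (fun i => cexpEta (η₀ i)) := by
    intro i j hij
    have hi : η₀ i ∈ Img Λ ξ := hη₀r ▸ Set.mem_range_self i
    have hj : η₀ j ∈ Img Λ ξ := hη₀r ▸ Set.mem_range_self j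
    exact hη₀.injective (cexpEta_inj_s13 hi.1 hj.1 hij)
  have hkey : ∀ z, P ξ z = 0 → Q ξ z z ≠ 0 := by
    intro z hz
    rw [← hpde]
    refine deriv_ne p hpm hpd (Finset.univ.map ⟨_, hinj⟩) (by simp) ?_ z (by rw [hpe, hz])
    intro w hw
    simp only [Finset.mem_map, Finset.mem_univ, true_and, Function.Embedding.coeFn_mk] at hw
    obtain ⟨i, rfl⟩ := hw
    rw [hpe]
    exact hev.self_of_nhds hξ _ (hη₀r ▸ Set.mem_range_self i)
  have hFc : ∀ i, Continuous (FT (φ i)) := fun i => FT_continuous (hφ i)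
  have hc := cexpEta_continuous
  obtain ⟨ε, hε, hεv⟩ := sep_of_continuous
    ((isCompact_Icc (a := (0:ℝ)) (b := 2)).prod (isCompact_Icc (a := (0:ℝ)) (b := 2)))
    (fun x y => ‖P x (cexpEta y.1)‖ + ‖Q x (cexpEta y.1) (cexpEta y.2)‖
      + ‖cexpEta y.1 - cexpEta y.2‖) (by simp only [P, Q, G]; fun_prop) ξ (by
      rintro ⟨a, b⟩ -
      by_contra hcon
      have h1 := norm_nonneg (P ξ (cexpEta a))
      have h2 := norm_nonneg (Q ξ (cexpEta a) (cexpEta b))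
      have h3 := norm_nonneg (cexpEta a - cexpEta b)
      have e1 : P ξ (cexpEta a) = 0 := norm_eq_zero.1 (by linarith)
      have e2 : Q ξ (cexpEta a) (cexpEta b) = 0 := norm_eq_zero.1 (by linarith)
      have e3 : cexpEta a - cexpEta b = 0 := norm_eq_zero.1 (by linarith)
      rw [← sub_eq_zero.1 e3] at e2
      exact hkey _ e1 e2)
  refine ⟨ε, hε, ?_⟩
  filter_upwards [hev, hεv] with x hx1 hx2 hk η hη η' hη' hne
  have p1 : P x (cexpEta η) = 0 := hx1 hk η hη
  have p2 : P x (cexpEta η') = 0 := hx1 hk η' hη'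
  have q : Q x (cexpEta η) (cexpEta η') = 0 := by
    have := hQ x (cexpEta η) (cexpEta η')
    rw [p1, p2, sub_zero] at this
    rcases mul_eq_zero.1 this with h | h
    · exact h
    · exact absurd (cexpEta_inj_s13 hη.1 hη'.1 (sub_eq_zero.1 h)) hne
  have := hx2 (η, η') ⟨Set.Ico_subset_Icc_self hη.1, Set.Ico_subset_Icc_self hη'.1⟩
  simpa [p1, q] using this

noncomputable def disc {k : ℕ} (η : Fin k → ℝ) : ℂ := ∏ p : Fin k, ∏ q : Fin k,
      if (q : ℕ) < (p : ℕ) then (cexpEta (η p) - cexpEta (η q)) ^ 2 else 1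

lemma disc_continuous {k : ℕ} : Continuous (disc (k := k)) := by
  unfold disc
  refine continuous_finsetProd _ fun p _ => continuous_finsetProd _ fun q _ => ?_
  have := cexpEta_continuous
  split_ifs <;> fun_prop

lemma sep_tau {k : ℕ} {Λ : Set (ℝ × ℝ)} {ξ : ℝ} (hξ : (Img Λ ξ).encard = k)
    (g : ℝ → ℂ) (hg : Continuous g)
    (h : ∀ᶠ x in 𝓝 ξ, (Img Λ x).encard = k → ∀ η : Fin k → ℝ, StrictMono η →
      Set.range η = Img Λ x → disc η + g x = 0) : SepAt Λ k ξ := by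
  have hc := cexpEta_continuous
  have hg0 : g ξ ≠ 0 := by
    intro h0
    obtain ⟨η, hη, hr⟩ := exists_enum hξ
    have hd := h.self_of_nhds hξ η hη hr
    rw [h0, add_zero] at hd
    unfold disc at hd
    obtain ⟨p, -, hp⟩ := Finset.prod_eq_zero_iff.1 hd
    obtain ⟨q, -, hq⟩ := Finset.prod_eq_zero_iff.1 hp
    split_ifs at hq with hqp
    · have hp : η p ∈ Img Λ ξ := hr ▸ Set.mem_range_self p
      have hq' : η q ∈ Img Λ ξ := hr ▸ Set.mem_range_self q
      have := cexpEta_inj_s13 hp.1 hq'.1 (sub_eq_zero.1 (pow_eq_zero_iff (two_ne_zero) |>.1 hq))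
      have := hη.injective this
      subst this
      exact lt_irrefl _ hqp
    · exact one_ne_zero hq
  have key : ∀ pq : Fin k × Fin k, pq.2 < pq.1 → ∃ ε : ℝ, 0 < ε ∧ ∀ᶠ x in 𝓝 ξ,
      (Img Λ x).encard = k → ∀ η : Fin k → ℝ, StrictMono η →
      Set.range η = Img Λ x → ε ≤ ‖cexpEta (η pq.1) - cexpEta (η pq.2)‖ := by
    rintro ⟨p, q⟩ hqp
    have hd := disc_continuous (k := k)
    obtain ⟨ε, hε, hεv⟩ := sep_of_continuous
      (isCompact_univ_pi (fun _ : Fin k => isCompact_Icc (a := (0:ℝ)) (b := 2)))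
      (fun x η => ‖disc η + g x‖ + ‖cexpEta (η p) - cexpEta (η q)‖) (by fun_prop) ξ (by
        intro η _
        by_contra hcon
        have h1 := norm_nonneg (disc η + g ξ)
        have h3 := norm_nonneg (cexpEta (η p) - cexpEta (η q))
        have e1 : disc η + g ξ = 0 := norm_eq_zero.1 (by linarith)
        have e3 : cexpEta (η p) - cexpEta (η q) = 0 := norm_eq_zero.1 (by linarith)
        have : disc η = 0 := by
          unfold disc
          refine Finset.prod_eq_zero (Finset.mem_univ p) (Finset.prod_eq_zero (Finset.mem_univ q) ?_)
          rw [if_pos (by exact hqp), e3]; simp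
        rw [this, zero_add] at e1
        exact hg0 e1)
    refine ⟨ε, hε, ?_⟩
    filter_upwards [h, hεv] with x hx1 hx2 hk η hη hr
    have := hx2 η (fun i _ => Set.Ico_subset_Icc_self (show η i ∈ Img Λ x from
      hr ▸ Set.mem_range_self i).1)
    simpa [hx1 hk η hη hr] using this
  choose! ε hε hεv using key
  obtain ⟨δ, hδ, hδε⟩ : ∃ δ : ℝ, 0 < δ ∧ ∀ pq : Fin k × Fin k, pq.2 < pq.1 → δ ≤ ε pq := by
    have h1 : ∀ᶠ δ : ℝ in 𝓝[>] 0, ∀ pq : Fin k × Fin k, pq.2 < pq.1 → δ ≤ ε pq := by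
      rw [Filter.eventually_all]
      intro pq
      by_cases hpq : pq.2 < pq.1
      · filter_upwards [Filter.Eventually.filter_mono nhdsWithin_le_nhds
          (eventually_lt_nhds (hε pq hpq))] with δ hδ _ using hδ.le
      · simp [hpq]
    obtain ⟨δ, h1, h2⟩ := (h1.and (self_mem_nhdsWithin (s := Set.Ioi (0:ℝ)))).exists
    exact ⟨δ, h2, h1⟩
  refine ⟨δ, hδ, ?_⟩
  have hall : ∀ᶠ x in 𝓝 ξ, ∀ pq : Fin k × Fin k, pq.2 < pq.1 → 
      (Img Λ x).encard = k → ∀ η : Fin k → ℝ, StrictMono η →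
      Set.range η = Img Λ x → ε pq ≤ ‖cexpEta (η pq.1) - cexpEta (η pq.2)‖ := by
    rw [Filter.eventually_all]
    intro pq
    by_cases hpq : pq.2 < pq.1
    · exact (hεv pq hpq).mono fun x hx _ => hx
    · simp [hpq]
  filter_upwards [hall] with x hx hk a ha b hb hab
  obtain ⟨η, hη, hr⟩ := exists_enum hk
  rw [← hr] at ha hb
  obtain ⟨i, rfl⟩ := ha
  obtain ⟨j, rfl⟩ := hb
  have hij : i ≠ j := fun h => hab (by rw [h])
  rcases lt_or_gt_of_ne hij with h | h
  · rw [norm_sub_rev]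
    exact (hδε (j, i) h).trans (hx (j, i) h hk η hη hr)
  · exact (hδε (i, j) h).trans (hx (i, j) h hk η hη hr)

lemma exists_closed {Λ : Set (ℝ × ℝ)} (hclosed : IsClosed Λ) (hper : Periodic2 Λ) {k : ℕ} {ξ : ℝ}
    (h : SepAt Λ k ξ) : ∃ C : Set ℝ, IsClosed C ∧ (∀ x ∈ C, (k : ℕ∞) ≤ (Img Λ x).encard) ∧
      ∀ᶠ x in 𝓝 ξ, (Img Λ x).encard = k → x ∈ C := by
  obtain ⟨ε, hε, hev⟩ := h
  have hc := cexpEta_continuous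
  let T : Set ((Fin k → Set.Icc (0:ℝ) 2) × ℝ) :=
    (⋂ i, {p | (p.2, (p.1 i : ℝ)) ∈ Λ}) ∩
    ⋂ i, ⋂ j, ⋂ (_ : i ≠ j), {p | ε ≤ ‖cexpEta (p.1 i) - cexpEta (p.1 j)‖}
  have hT : IsClosed T := by
    refine IsClosed.inter (isClosed_iInter fun i => hclosed.preimage (by fun_prop))
      (isClosed_iInter fun i => isClosed_iInter fun j => isClosed_iInter fun _ =>
        isClosed_le (by fun_prop) (by fun_prop))
  refine ⟨Prod.snd '' T, isClosedMap_snd_of_compactSpace _ hT, ?_, ?_⟩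
  · rintro _ ⟨⟨η, x⟩, ⟨h1, h2⟩, rfl⟩
    simp only [Set.mem_iInter, Set.mem_ofPred_eq] at h1 h2
    choose η' hη' he using fun i => exists_Img hper (h1 i)
    have hinj : Function.Injective η' := by
      intro i j hij
      by_contra hne
      have := h2 i j hne
      rw [← he i, ← he j, hij, sub_self, norm_zero] at this
      linarith
    have hsub : Set.range η' ⊆ Img Λ x := by
      rintro _ ⟨i, rfl⟩; exact hη' i
    calc (k : ℕ∞) = (Set.range η').encard := by
          rw [← Set.image_univ, hinj.encard_image, Set.encard_univ]; simp
      _ ≤ _ := Set.encard_le_encard hsub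
  · filter_upwards [hev] with x hx hk
    obtain ⟨η, hη, hr⟩ := exists_enum hk
    have hm : ∀ i, η i ∈ Img Λ x := fun i => hr ▸ Set.mem_range_self i
    refine ⟨(fun i => ⟨η i, Set.Ico_subset_Icc_self (hm i).1⟩, x), ⟨?_, ?_⟩, rfl⟩
    · simp only [Set.mem_iInter, Set.mem_ofPred_eq]
      exact fun i => (hm i).2
    · simp only [Set.mem_iInter, Set.mem_ofPred_eq]
      exact fun i j hij => hx hk _ (hm i) _ (hm j) (hη.injective.ne hij)

lemma exists_const_card {Λ : Set (ℝ × ℝ)} (hclosed : IsClosed Λ) (hper : Periodic2 Λ) {J : Set ℝ}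
    (hsep : ∀ x ∈ J, ∀ k : ℕ, 1 ≤ k → (Img Λ x).encard = k → SepAt Λ k x) (k : ℕ) :
    ∀ U : Set ℝ, IsOpen U → U.Nonempty → U ⊆ J → (∀ x ∈ U, (Img Λ x).encard ≤ k) →
    ∃ j : ℕ, ∃ V : Set ℝ, IsOpen V ∧ V.Nonempty ∧ V ⊆ J ∧ ∀ x ∈ V, (Img Λ x).encard = j := by
  induction k with
  | zero =>
    intro U hU hne hUJ hle
    exact ⟨0, U, hU, hne, hUJ, fun x hx => le_antisymm (hle x hx) (zero_le)⟩
  | succ k ih =>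
    intro U hU hne hUJ hle
    have hlt : ∀ x ∈ U, (Img Λ x).encard ≠ ((k + 1 : ℕ) : ℕ∞) → (Img Λ x).encard ≤ k := by
      intro x hx h
      have := lt_of_le_of_ne (hle x hx) h
      rw [Nat.cast_add, Nat.cast_one] at this
      exact Order.le_of_lt_add_one this
    by_cases hex : ∃ x ∈ U, (Img Λ x).encard = ((k + 1 : ℕ) : ℕ∞)
    · obtain ⟨ξ, hξU, hξ⟩ := hex
      obtain ⟨C, hC, hCle, hev⟩ := exists_closed hclosed hper
        (hsep ξ (hUJ hξU) (k + 1) (by omega) hξ)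
      obtain ⟨W, hW, hWo, hξW⟩ := mem_nhds_iff.1 (Filter.inter_mem hev (hU.mem_nhds hξU))
      by_cases hall : W ⊆ C
      · refine ⟨k + 1, W, hWo, ⟨ξ, hξW⟩, fun x hx => hUJ (hW hx).2, fun x hx => ?_⟩
        exact le_antisymm (hle x (hW hx).2) (hCle x (hall hx))
      · obtain ⟨y, hy, hyC⟩ := Set.not_subset.1 hall
        refine ih (W ∩ Cᶜ) (hWo.inter hC.isOpen_compl) ⟨y, hy, hyC⟩
          (fun x hx => hUJ (hW hx.1).2) (fun x hx => hlt x (hW hx.1).2 fun h => ?_)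
        exact hx.2 ((hW hx.1).1 h)
    · push Not at hex
      exact ih U hU hne hUJ fun x hx => hlt x hx (hex x hx)

lemma projExact_iff {Λ : Set (ℝ × ℝ)} {k : ℕ} (hk : 1 ≤ k) (x : ℝ) :
    x ∈ projExact Λ k ↔ (Img Λ x).encard = k := by
  refine ⟨fun h => h.2, fun h => ⟨?_, h⟩⟩
  have : (Img Λ x).Nonempty := by
    rw [← Set.encard_ne_zero, h]
    simp; omega
  obtain ⟨η, hη⟩ := this
  exact ⟨η, hη.2⟩

lemma locPoly_of_su {n k : ℕ} {Λ : Set (ℝ × ℝ)} {ξ : ℝ} (hk : 1 ≤ k)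
    (h : ξ ∈ projStarSu Λ n k) : LocPoly n Λ k ξ := by
  obtain ⟨-, a, b, hab, φ, hφ, hz⟩ := h
  refine ⟨φ, hφ, ?_⟩
  filter_upwards [isOpen_Ioo.mem_nhds hab] with x hx hk' η hη
  rw [hz x ⟨hx, (projExact_iff hk x).2 hk'⟩ η hη]
  simp

lemma locPoly_of_one {n : ℕ} {Λ : Set (ℝ × ℝ)} {ξ : ℝ}
    (h : ξ ∈ projOneStar Λ n) : LocPoly n Λ 1 ξ := by
  obtain ⟨-, χ, hχ, a, b, hab, φ, hφ, hz⟩ := h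
  refine ⟨φ, hφ, ?_⟩
  filter_upwards [isOpen_Ioo.mem_nhds hab] with x hx hk' η hη
  have hx1 := (projExact_iff le_rfl x).2 hk'
  rw [← hχ x hx1 η hη]
  exact hz x ⟨hx, hx1⟩

lemma sep_one {Λ : Set (ℝ × ℝ)} {ξ : ℝ} : SepAt Λ 1 ξ := by
  refine ⟨1, one_pos, Filter.Eventually.of_forall fun x hx η hη η' hη' hne => ?_⟩
  exact absurd (Set.encard_le_one_iff.1 (le_of_eq (by simpa using hx)) η η' hη hη') hne

lemma sep_of_tilde {n k : ℕ} {Λ : Set (ℝ × ℝ)} {ξ : ℝ} (hk : 1 ≤ k)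
    (h : ξ ∈ projStarNeTilde Λ n k) : SepAt Λ k ξ := by
  obtain ⟨-, h1, τ, hτ, a, b, hab, φ, hφ, hz⟩ := h
  refine sep_tau h1.2 (FT (φ 0)) (FT_continuous (hφ 0)) ?_
  filter_upwards [isOpen_Ioo.mem_nhds hab] with x hx hk' η hη hr
  have hx1 := (projExact_iff hk x).2 hk'
  have h2 := hz x ⟨hx, hx1⟩
  have h3 : τ x = disc η := hτ x hx1 η hη hr
  rw [← h3]
  simpa [add_comm] using h2

lemma final {n : ℕ} (hn : 2 ≤ n) {Λ : Set (ℝ × ℝ)} (hper : Periodic2 Λ) (hHUP : IsHUP n Λ)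
    {V : Set ℝ} (hV : IsOpen V) {ξ : ℝ} (hξ : ξ ∈ V)
    (φ : Fin (n - 1) → ℝ → ℂ) (hφ : ∀ i, Integrable (φ i))
    (hz : ∀ x ∈ V, ∀ η ∈ Img Λ x,
      (∑ i : Fin (n - 1), FT (φ i) x * cexpEta η ^ (i : ℕ)) + cexpEta η ^ (n - 1) = 0) : False := by
  obtain ⟨N, rfl⟩ : ∃ N, n = N + 1 := ⟨n - 1, by omega⟩
  change Fin N → ℝ → ℂ at φ
  change ∀ x ∈ V, ∀ η ∈ Img Λ x,
      (∑ i : Fin N, FT (φ i) x * cexpEta η ^ (i : ℕ)) + cexpEta η ^ N = 0 at hz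
  obtain ⟨h, hh, hsupp, hne⟩ := exists_FT_bump (hV.mem_nhds hξ)
  choose g hg hgF using fun i => FT_conv_s13 (hφ i) hh
  have := hHUP (Fin.snoc (α := fun _ => ℝ → ℂ) g h) (by
    intro m
    refine Fin.lastCases ?_ (fun i => ?_) m
    · simpa using hh
    · simpa using hg i) (by
    intro x η hx
    rw [Fin.sum_univ_castSucc]
    simp only [Fin.snoc_castSucc, Fin.snoc_last, hgF, Fin.val_castSucc, Fin.val_last]
    by_cases hxV : x ∈ V
    · obtain ⟨η', hη', he⟩ := exists_Img hper hx
      have h2 := hz x hxV η' hη'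
      rw [he] at h2
      calc _ = ((∑ i : Fin N, FT (φ i) x * cexpEta η ^ (i : ℕ)) + cexpEta η ^ N) * FT h x := by
            rw [add_mul, Finset.sum_mul]
            congr 1
            exact Finset.sum_congr rfl fun i _ => by ring
        _ = 0 := by rw [h2, zero_mul]
    · simp [hsupp x hxV]) (Fin.last N)
  rw [Fin.snoc_last] at this
  apply hne
  rw [FT_eq, Real.fourier_congr_ae this]
  simp [Real.fourier_eq]

theorem improved_necessary_part (n : ℕ) (hn : 2 ≤ n) (Λ : Set (ℝ × ℝ))
    (hclosed : IsClosed Λ) (hper : Periodic2 Λ) (hHUP : IsHUP n Λ) :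
    Dense (projAtLeast Λ n ∪ (projExact Λ 1 \ projOneStar Λ n) ∪
      (projExact Λ (n - 1) \ projStarSu Λ n (n - 1)) ∪
      ⋃ j ∈ Finset.Icc 2 (n - 2), (projExact Λ j \ projStarNeTilde Λ n j)) := by
  rw [dense_iff_inter_open]
  intro J hJ hJne
  by_contra hcon
  rw [Set.not_nonempty_iff_eq_empty] at hcon
  have hnot := fun x (hx : x ∈ J) => fun h => (Set.eq_empty_iff_forall_notMem.1 hcon x) ⟨hx, h⟩
  have hlt : ∀ x ∈ J, (Img Λ x).encard ≤ ((n - 1 : ℕ) : ℕ∞) := by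
    intro x hx
    by_contra hgt
    have hge : (n : ℕ∞) ≤ (Img Λ x).encard := by
      have h1 := Order.add_one_le_of_lt (not_le.1 hgt)
      have h2 : ((n - 1 : ℕ) : ℕ∞) + 1 = n := by
        have : n - 1 + 1 = n := by omega
        exact_mod_cast this
      rwa [h2] at h1
    have hne : (Img Λ x).Nonempty := by
      rw [← Set.encard_ne_zero]
      intro h0
      rw [h0] at hgt
      exact hgt zero_le
    obtain ⟨η, hη⟩ := hne
    exact hnot x hx (Or.inl (Or.inl (Or.inl ⟨⟨η, hη.2⟩, hge⟩)))
  have hgood : ∀ x ∈ J, ∀ k : ℕ, 1 ≤ k → (Img Λ x).encard = k →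
      SepAt Λ k x ∧ LocPoly n Λ k x := by
    intro x hx k hk hxk
    have hE := (projExact_iff hk x).2 hxk
    have hkn : k ≤ n - 1 := by
      have := hlt x hx
      rw [hxk] at this
      exact_mod_cast this
    by_cases h1 : k = 1
    · subst h1
      refine ⟨sep_one, locPoly_of_one ?_⟩
      by_contra hc
      exact hnot x hx (Or.inl (Or.inl (Or.inr ⟨hE, hc⟩)))
    by_cases h2 : k = n - 1
    · subst h2
      have hL : LocPoly n Λ (n - 1) x := by
        refine locPoly_of_su hk ?_
        by_contra hc
        exact hnot x hx (Or.inl (Or.inr ⟨hE, hc⟩))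
      exact ⟨sep_su hxk hL, hL⟩
    · have hT : x ∈ projStarNeTilde Λ n k := by
        by_contra hc
        refine hnot x hx (Or.inr ?_)
        simp only [Set.mem_iUnion]
        exact ⟨k, Finset.mem_Icc.2 ⟨by omega, by omega⟩, hE, hc⟩
      exact ⟨sep_of_tilde hk hT, locPoly_of_su hk hT.1⟩
  obtain ⟨j, V, hV, ⟨ξ, hξ⟩, hVJ, hVj⟩ := exists_const_card hclosed hper
    (fun x hx k hk h => (hgood x hx k hk h).1) (n - 1) J hJ hJne subset_rfl hlt
  rcases Nat.eq_zero_or_pos j with h0 | h0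
  · refine final hn hper hHUP hV hξ (fun _ => 0) (fun _ => integrable_zero _ _ _) ?_
    intro x hx η hη
    have := hVj x hx
    rw [h0, Nat.cast_zero, Set.encard_eq_zero] at this
    rw [this] at hη
    exact hη.elim
  · obtain ⟨φ, hφ, hev⟩ := (hgood ξ (hVJ hξ) j h0 (hVj ξ hξ)).2
    obtain ⟨W, hW, hWo, hξW⟩ := mem_nhds_iff.1 (Filter.inter_mem hev (hV.mem_nhds hξ))
    exact final hn hper hHUP hWo hξW φ hφ fun x hx => (hW hx).1 (hVj x (hW hx).2)
end
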